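/- Fix an integer d ≥ 1, a finite-dimensional complex Hilbert space H, a Clifford system (c_1, …, c_d, γ) on H, and unitaries U_1, …, U_d on H, each commuting with every c_j and with γ. Let δ ≥ 0 satisfy ‖U_j U_l − U_l U_j‖ ≤ δ for all j, l, and let real numbers m, K satisfy 0 < m ≤ K and m² > 4 d² K² δ. Then for every κ ∈ [m, K] the operator D(κ, m) is invertible, and 𝐈(D(K, m)) = 𝐈(D(1, 1)). -/

import Mathlib

noncomputable section

/-- A Clifford system `(c_1, …, c_d, γ)` on a complex Hilbert space `H`:
`c_j* = -c_j`, `c_j c_l + c_l c_j = -2 δ_{jl} 1`, `γ* = γ`, `γ² = 1`, `γ c_j = -c_j γ`. -/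
structure CliffordSystem (H : Type*) [NormedAddCommGroup H] [InnerProductSpace ℂ H]
    [CompleteSpace H] (d : ℕ) where
  c : Fin d → H →L[ℂ] H
  γ : H →L[ℂ] H
  c_skew : ∀ j, star (c j) = -c j
  c_rel : ∀ j l, c j * c l + c l * c j =
    if j = l then (-2 : ℂ) • (1 : H →L[ℂ] H) else 0
  γ_sa : star γ = γ
  γ_sq : γ * γ = 1
  γ_anticomm : ∀ j, γ * c j = -(c j * γ)

variable {H : Type*} [NormedAddCommGroup H] [InnerProductSpace ℂ H] [CompleteSpace H]

/-- `x = (U - U*)/(2i)`, the "imaginary part" of a unitary `U`. -/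
def xPart (U : H →L[ℂ] H) : H →L[ℂ] H := ((2 * Complex.I)⁻¹ : ℂ) • (U - star U)

/-- `y = (U + U*)/2`, the "real part" of a unitary `U`. -/
def yPart (U : H →L[ℂ] H) : H →L[ℂ] H := ((2 : ℂ)⁻¹ : ℂ) • (U + star U)

/-- The massive hermitian Wilson--Dirac operator
`D(κ, m) = κ·Σ_j i x_j c_j + γ·(κ·Σ_j (y_j − 1) + m)`. -/
def wilsonDirac {d : ℕ} (cs : CliffordSystem H d) (U : Fin d → H →L[ℂ] H)
    (κ m : ℝ) : H →L[ℂ] H :=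
  (κ : ℂ) • (∑ j, Complex.I • (xPart (U j) * cs.c j)) +
    cs.γ * ((κ : ℂ) • (∑ j, (yPart (U j) - 1)) + (m : ℂ) • (1 : H →L[ℂ] H))

/-- `f_m(k)² = Σ_j sin²(2π k_j) + (Σ_j (cos(2π k_j) − 1) + m)²`. -/
def fmSq (d : ℕ) (m : ℝ) (k : Fin d → ℝ) : ℝ :=
  ∑ j, Real.sin (2 * Real.pi * k j) ^ 2 +
    (∑ j, (Real.cos (2 * Real.pi * k j) - 1) + m) ^ 2

/-- `E_{>0}(A)`: the sum of the eigenspaces of `A` with positive (real) eigenvalue. -/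
def posSpace (A : H →L[ℂ] H) : Submodule ℂ H :=
  ⨆ (μ : ℝ) (_ : 0 < μ), Module.End.eigenspace (A.toLinearMap) (μ : ℂ)

/-- `E_{<0}(A)`: the sum of the eigenspaces of `A` with negative (real) eigenvalue. -/
def negSpace (A : H →L[ℂ] H) : Submodule ℂ H :=
  ⨆ (μ : ℝ) (_ : μ < 0), Module.End.eigenspace (A.toLinearMap) (μ : ℂ)

/-- `𝐈(A) = (dim E_{>0}(A) − dim E_{<0}(A))/2`, a priori a half-integer. -/
def Ind (A : H →L[ℂ] H) : ℚ :=
  ((Module.finrank ℂ (posSpace A) : ℚ) - (Module.finrank ℂ (negSpace A) : ℚ)) / 2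

end

/-!
Write `P = Σ_j i x_j c_j` and `Z = Σ_j z_j` with `z_j = 1 - y_j ≥ 0`, so that
`D(κ, m) = κ P + γ (m - κ Z)`. Since `γ` anticommutes with `P` and `x_j² = 2 z_j - z_j²`,

`D(κ, m)² = m² + 2κ(κ - m) Z + κ² (P² - Σ_j x_j²) + κ² (Z² - Σ_j z_j²) + κ² γ [P, Z]`.

For `0 ≤ κ` and `m ≤ κ` the second term is nonnegative. The remaining ones vanish when the `U_j`
commute, apart from the sum of the products `z_j z_l`, `j ≠ l`, which is then nonnegative; in
general they are bounded below by a multiple of `κ² Δ`, where `Δ = Σ_{j,l} ‖[U_j, U_l]‖`. Hence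
`D(κ, m)` is invertible as soon as the slope `m / κ ∈ (0, 1]` satisfies `2 Δ < (m / κ)²`. These
parameters form a convex set, and the index is locally constant on invertible self-adjoint
operators, so it is constant on that set.
-/

section Commutators

theorem norm_lie_comm {A : Type*} [NormedRing A] (a b : A) : ‖⁅a, b⁆‖ = ‖⁅b, a⁆‖ :=
  norm_sub_rev _ _

theorem norm_lie_star_of_mem_unitary {A : Type*} [NormedRing A] [StarRing A] [CStarRing A] {v : A}
    (hv : v ∈ unitary A) (a : A) : ‖⁅a, star v⁆‖ = ‖⁅a, v⁆‖ := by
  have hconj : v * ⁅a, star v⁆ * v = ⁅v, a⁆ := by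
    calc v * ⁅a, star v⁆ * v = v * a * (star v * v) - v * star v * a * v := by
          rw [Ring.lie_def]; noncomm_ring
      _ = ⁅v, a⁆ := by
          rw [Unitary.star_mul_self_of_mem hv, Unitary.mul_star_self_of_mem hv, mul_one, one_mul,
            Ring.lie_def]
  rw [← CStarRing.norm_mem_unitary_mul ⁅a, star v⁆ hv, ← CStarRing.norm_mul_mem_unitary _ hv,
    hconj, norm_lie_comm]

theorem norm_lie_le_of_mem_unitary {A : Type*} [NormedRing A] [StarRing A] [CStarRing A] {v : A}
    (hv : v ∈ unitary A) (a : A) : ‖⁅v, a⁆‖ ≤ 2 * ‖a‖ := by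
  refine (norm_sub_le _ _).trans_eq ?_
  rw [CStarRing.norm_mem_unitary_mul a hv, CStarRing.norm_mul_mem_unitary a hv, two_mul]

/-- The total size of the commutators of the `u j`, each pair being counted twice. It bounds all
deviations from the flat case, in which the `u j` commute. -/
def commutatorDefect {ι A : Type*} [Fintype ι] [NormedRing A] (u : ι → A) : ℝ :=
  ∑ j, ∑ l, ‖⁅u j, u l⁆‖

theorem commutatorDefect_le {ι A : Type*} [Fintype ι] [NormedRing A] {u : ι → A} {δ : ℝ}
    (hδ : ∀ j l, ‖⁅u j, u l⁆‖ ≤ δ) : commutatorDefect u ≤ Fintype.card ι ^ 2 * δ :=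
  calc commutatorDefect u ≤ ∑ _j : ι, ∑ _l : ι, δ :=
        Finset.sum_le_sum fun j _ => Finset.sum_le_sum fun l _ => hδ j l
    _ = Fintype.card ι ^ 2 * δ := by simp [sq, mul_assoc]

theorem add_mul_self_of_anticommute {R : Type*} [Ring R] {p a γ : R} (hp : p * γ = -(γ * p))
    (ha : Commute a γ) (hγ : γ * γ = 1) :
    (p + γ * a) * (p + γ * a) = p * p + a * a + γ * ⁅a, p⁆ := by
  have hcross : p * (γ * a) = -(γ * (p * a)) := by rw [← mul_assoc, hp, neg_mul, mul_assoc]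
  have hsq : γ * a * (γ * a) = a * a := by
    rw [mul_assoc, ha.left_comm, ← mul_assoc γ γ, hγ, one_mul]
  rw [add_mul, mul_add, mul_add, hcross, hsq, Ring.lie_def, mul_sub, mul_assoc]
  abel

theorem lie_lie_of_commute {R : Type*} [Ring R] {p q : R} (h : Commute p q) (a : R) :
    ⁅p, ⁅a, q⁆⁆ = p * a * q + q * a * p - (p * q * a + a * (p * q)) := by
  have hqp : a * (p * q) = a * (q * p) := by rw [h.eq]
  rw [hqp, Ring.lie_def, Ring.lie_def]
  noncomm_ring

variable {A : Type*} [CStarAlgebra A] [PartialOrder A] [StarOrderedRing A]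

theorem isSelfAdjoint_le_smul_one {a : A} (ha : IsSelfAdjoint a) {r : ℝ} (hr : ‖a‖ ≤ r) :
    a ≤ r • 1 := by
  refine ha.le_algebraMap_norm_self.trans ?_
  rw [Algebra.algebraMap_eq_smul_one]
  exact smul_le_smul_of_nonneg_right hr zero_le_one

theorem neg_smul_one_le_isSelfAdjoint {a : A} (ha : IsSelfAdjoint a) {r : ℝ} (hr : ‖a‖ ≤ r) :
    -(r • 1) ≤ a :=
  neg_le.1 (isSelfAdjoint_le_smul_one ha.neg ((norm_neg a).trans_le hr))

/- With `b = 1 - v`, the anticommutator of `b* b` and `a` differs from `b* a b + b a b* ≥ 0` by the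
double commutator `[b*, [a, b]] = [v*, [a, v]]`. -/
theorem neg_two_mul_norm_lie_le_anticommutator {v a : A} (hv : v ∈ unitary A) (ha : 0 ≤ a) :
    -((2 * ‖⁅a, v⁆‖) • 1) ≤ star (1 - v) * (1 - v) * a + a * (star (1 - v) * (1 - v)) := by
  set b := 1 - v with hb
  have hnormal : Commute (star b) b := by
    have hv' : Commute (star v) v := (Unitary.coe_isStarNormal ⟨v, hv⟩).star_comm_self
    rw [hb, star_sub, star_one]
    exact (Commute.one_left _).sub_left ((Commute.one_right _).sub_right hv')
  have hconj : 0 ≤ star b * a * b + b * a * star b :=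
    add_nonneg (star_left_conjugate_nonneg ha b) (star_right_conjugate_nonneg ha b)
  have hlie := lie_lie_of_commute hnormal a
  have hsa : IsSelfAdjoint ⁅star b, ⁅a, b⁆⁆ := by
    rw [hlie]
    refine (IsSelfAdjoint.of_nonneg hconj).sub ?_
    simp only [IsSelfAdjoint, star_add, star_mul, star_star, (IsSelfAdjoint.of_nonneg ha).star_eq,
      add_comm]
  have hnorm : ‖⁅star b, ⁅a, b⁆⁆‖ ≤ 2 * ‖⁅a, v⁆‖ := by
    have hlie' : ⁅star b, ⁅a, b⁆⁆ = ⁅star v, ⁅a, v⁆⁆ := by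
      simp only [hb, star_sub, star_one, Ring.lie_def]
      noncomm_ring
    exact hlie' ▸ norm_lie_le_of_mem_unitary (Unitary.star_mem hv) _
  have herr := isSelfAdjoint_le_smul_one hsa hnorm
  rw [hlie, sub_le_iff_le_add] at herr
  exact neg_le_iff_add_nonneg'.2 (hconj.trans herr)

end Commutators

section Parts

variable {H : Type*} [NormedAddCommGroup H] [InnerProductSpace ℂ H] [CompleteSpace H]

/-- `z = 1 - y`, a summand of the Wilson term; it is nonnegative when `U` is unitary. -/
noncomputable def zPart (U : H →L[ℂ] H) : H →L[ℂ] H := 1 - yPart U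

theorem isSelfAdjoint_xPart (U : H →L[ℂ] H) : IsSelfAdjoint (xPart U) := by
  rw [IsSelfAdjoint, xPart, star_smul, star_sub, star_star, ← neg_sub, smul_neg, ← neg_smul]
  simp

theorem isSelfAdjoint_zPart (U : H →L[ℂ] H) : IsSelfAdjoint (zPart U) := by
  rw [IsSelfAdjoint, zPart, star_sub, star_one, yPart, star_smul, star_add, star_star, add_comm]
  simp

variable {U V : H →L[ℂ] H}

theorem zPart_eq_smul_star_mul_self (hU : U ∈ unitary (H →L[ℂ] H)) :
    zPart U = (2⁻¹ : ℝ) • (star (1 - U) * (1 - U)) := by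
  rw [star_sub, star_one, sub_mul, one_mul, mul_sub, mul_one, Unitary.star_mul_self_of_mem hU,
    zPart, yPart]
  module

theorem zPart_nonneg (hU : U ∈ unitary (H →L[ℂ] H)) : 0 ≤ zPart U := by
  rw [zPart_eq_smul_star_mul_self hU]
  exact smul_nonneg (by norm_num) (star_mul_self_nonneg _)

theorem xPart_mul_self (hU : U ∈ unitary (H →L[ℂ] H)) :
    xPart U * xPart U = (2 : ℝ) • zPart U - zPart U * zPart U := by
  have hI : ((2 * Complex.I)⁻¹ * (2 * Complex.I)⁻¹ : ℂ) = -(1 / 4) := by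
    rw [← mul_inv, mul_mul_mul_comm, Complex.I_mul_I]
    norm_num
  rw [xPart, smul_mul_smul_comm, hI]
  simp only [zPart, yPart, mul_sub, sub_mul, mul_add, add_mul, one_mul, mul_one, smul_mul_assoc,
    mul_smul_comm, Unitary.star_mul_self_of_mem hU, Unitary.mul_star_self_of_mem hU]
  module

theorem norm_lie_xPart_le (hU : U ∈ unitary (H →L[ℂ] H)) (a : H →L[ℂ] H) :
    ‖⁅a, xPart U⁆‖ ≤ ‖⁅a, U⁆‖ := by
  have hlie : ⁅a, xPart U⁆ = ((2 * Complex.I)⁻¹ : ℂ) • (⁅a, U⁆ - ⁅a, star U⁆) := by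
    simp only [xPart, Ring.lie_def, mul_smul_comm, smul_mul_assoc, mul_sub, sub_mul]
    module
  have hnorm := norm_sub_le ⁅a, U⁆ ⁅a, star U⁆
  rw [norm_lie_star_of_mem_unitary hU] at hnorm
  rw [hlie, norm_smul, norm_inv, norm_mul, Complex.norm_I, Complex.norm_ofNat]
  linarith

theorem norm_lie_zPart_le (hU : U ∈ unitary (H →L[ℂ] H)) (a : H →L[ℂ] H) :
    ‖⁅a, zPart U⁆‖ ≤ ‖⁅a, U⁆‖ := by
  have hlie : ⁅a, zPart U⁆ = -(2⁻¹ : ℂ) • (⁅a, U⁆ + ⁅a, star U⁆) := by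
    simp only [zPart, yPart, Ring.lie_def, mul_smul_comm, smul_mul_assoc, mul_sub, sub_mul, mul_add,
      add_mul, mul_one, one_mul]
    module
  have hnorm := norm_add_le ⁅a, U⁆ ⁅a, star U⁆
  rw [norm_lie_star_of_mem_unitary hU] at hnorm
  rw [hlie, norm_smul, norm_neg, norm_inv, Complex.norm_ofNat]
  linarith

theorem commute_xPart_right {a : H →L[ℂ] H} (hU : U ∈ unitary (H →L[ℂ] H)) (h : Commute a U) :
    Commute a (xPart U) := by
  have hlie := norm_lie_xPart_le hU a
  rwa [h.lie_eq, norm_zero, norm_le_zero_iff, ← commute_iff_lie_eq] at hlie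

theorem commute_zPart_right {a : H →L[ℂ] H} (hU : U ∈ unitary (H →L[ℂ] H)) (h : Commute a U) :
    Commute a (zPart U) := by
  have hlie := norm_lie_zPart_le hU a
  rwa [h.lie_eq, norm_zero, norm_le_zero_iff, ← commute_iff_lie_eq] at hlie

theorem norm_lie_xPart_xPart_le (hU : U ∈ unitary (H →L[ℂ] H)) (hV : V ∈ unitary (H →L[ℂ] H)) :
    ‖⁅xPart U, xPart V⁆‖ ≤ ‖⁅U, V⁆‖ := by
  refine (norm_lie_xPart_le hV _).trans ?_
  rw [norm_lie_comm, norm_lie_comm U]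
  exact norm_lie_xPart_le hU V

theorem norm_lie_xPart_zPart_le (hU : U ∈ unitary (H →L[ℂ] H)) (hV : V ∈ unitary (H →L[ℂ] H)) :
    ‖⁅xPart U, zPart V⁆‖ ≤ ‖⁅U, V⁆‖ := by
  refine (norm_lie_zPart_le hV _).trans ?_
  rw [norm_lie_comm, norm_lie_comm U]
  exact norm_lie_xPart_le hU V

theorem neg_norm_lie_le_anticommutator_zPart (hU : U ∈ unitary (H →L[ℂ] H))
    (hV : V ∈ unitary (H →L[ℂ] H)) :
    -(‖⁅U, V⁆‖ • 1) ≤ zPart U * zPart V + zPart V * zPart U := by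
  have hnorm : ‖⁅zPart V, U⁆‖ ≤ ‖⁅U, V⁆‖ := by
    rw [norm_lie_comm]
    exact norm_lie_zPart_le hV U
  have h := smul_le_smul_of_nonneg_left
    (neg_two_mul_norm_lie_le_anticommutator hU (zPart_nonneg hV)) (show (0 : ℝ) ≤ 2⁻¹ by norm_num)
  rw [smul_neg, smul_smul, inv_mul_cancel_left₀ two_ne_zero] at h
  have hz : zPart U * zPart V + zPart V * zPart U = (2⁻¹ : ℝ) •
      (star (1 - U) * (1 - U) * zPart V + zPart V * (star (1 - U) * (1 - U))) := by
    rw [zPart_eq_smul_star_mul_self hU, smul_mul_assoc, mul_smul_comm, smul_add]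
  rw [hz]
  exact (neg_le_neg (smul_le_smul_of_nonneg_right hnorm zero_le_one)).trans h

end Parts

section Gap

variable {H : Type*} [NormedAddCommGroup H] [InnerProductSpace ℂ H] [CompleteSpace H] {d : ℕ}

theorem CliffordSystem.c_mul_self (cs : CliffordSystem H d) (j : Fin d) :
    cs.c j * cs.c j = -1 := by
  have hrel := cs.c_rel j j
  rw [if_pos rfl, ← two_smul ℂ, neg_smul, ← smul_neg] at hrel
  exact smul_right_injective _ (two_ne_zero' ℂ) hrel

theorem CliffordSystem.c_mem_unitary (cs : CliffordSystem H d) (j : Fin d) :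
    cs.c j ∈ unitary (H →L[ℂ] H) := by
  simp [Unitary.mem_iff, cs.c_skew, cs.c_mul_self]

theorem CliffordSystem.γ_mem_unitary (cs : CliffordSystem H d) : cs.γ ∈ unitary (H →L[ℂ] H) := by
  simp [Unitary.mem_iff, cs.γ_sa, cs.γ_sq]

/-- The naive lattice Dirac operator `Σ_j i x_j c_j`, without mass and Wilson term. -/
noncomputable def naiveDirac (cs : CliffordSystem H d) (U : Fin d → H →L[ℂ] H) : H →L[ℂ] H :=
  ∑ j, Complex.I • (xPart (U j) * cs.c j)

/-- The Wilson term `Σ_j (1 - y_j)`, which lifts the spurious zero modes of `naiveDirac`. -/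
noncomputable def wilsonTerm (U : Fin d → H →L[ℂ] H) : H →L[ℂ] H := ∑ j, zPart (U j)

theorem wilsonDirac_eq (cs : CliffordSystem H d) (U : Fin d → H →L[ℂ] H) (κ m : ℝ) :
    wilsonDirac cs U κ m = κ • naiveDirac cs U + cs.γ * (m • 1 - κ • wilsonTerm U) := by
  have hZ : ∑ j, (yPart (U j) - 1) = -wilsonTerm U := by
    simp only [wilsonTerm, zPart, ← Finset.sum_neg_distrib, neg_sub]
  rw [wilsonDirac, hZ, smul_neg, neg_add_eq_sub, naiveDirac]
  simp only [Complex.coe_smul]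

theorem continuous_wilsonDirac (cs : CliffordSystem H d) (U : Fin d → H →L[ℂ] H) :
    Continuous fun p : ℝ × ℝ => wilsonDirac cs U p.1 p.2 := by
  simp only [wilsonDirac_eq]
  fun_prop

theorem sum_xPart_mul_self {U : Fin d → H →L[ℂ] H} (hU : ∀ j, U j ∈ unitary (H →L[ℂ] H)) :
    ∑ j, xPart (U j) * xPart (U j) =
      (2 : ℝ) • wilsonTerm U - ∑ j, zPart (U j) * zPart (U j) := by
  rw [wilsonTerm, Finset.smul_sum, ← Finset.sum_sub_distrib]
  exact Finset.sum_congr rfl fun j _ => xPart_mul_self (hU j)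

theorem isSelfAdjoint_wilsonTerm (U : Fin d → H →L[ℂ] H) : IsSelfAdjoint (wilsonTerm U) :=
  isSelfAdjoint_sum _ fun j _ => isSelfAdjoint_zPart (U j)

variable {cs : CliffordSystem H d} {U : Fin d → H →L[ℂ] H}

theorem wilsonTerm_nonneg (hU : ∀ j, U j ∈ unitary (H →L[ℂ] H)) : 0 ≤ wilsonTerm U :=
  Finset.sum_nonneg fun j _ => zPart_nonneg (hU j)

theorem commute_wilsonTerm_γ (hU : ∀ j, U j ∈ unitary (H →L[ℂ] H))
    (hUγ : ∀ j, Commute (U j) cs.γ) : Commute (wilsonTerm U) cs.γ :=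
  Commute.sum_left _ _ _ fun j _ => (commute_zPart_right (hU j) (hUγ j).symm).symm

theorem isSelfAdjoint_naiveDirac (hU : ∀ j, U j ∈ unitary (H →L[ℂ] H))
    (hUc : ∀ j l, Commute (U j) (cs.c l)) : IsSelfAdjoint (naiveDirac cs U) := by
  refine isSelfAdjoint_sum _ fun j _ => ?_
  rw [IsSelfAdjoint, star_smul, star_mul, (isSelfAdjoint_xPart _).star_eq, cs.c_skew, neg_mul,
    (commute_xPart_right (hU j) (hUc j j).symm).eq, Complex.star_def, Complex.conj_I, neg_smul_neg]

theorem naiveDirac_mul_γ (hU : ∀ j, U j ∈ unitary (H →L[ℂ] H))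
    (hUγ : ∀ j, Commute (U j) cs.γ) : naiveDirac cs U * cs.γ = -(cs.γ * naiveDirac cs U) := by
  rw [naiveDirac, Finset.sum_mul, Finset.mul_sum, ← Finset.sum_neg_distrib]
  refine Finset.sum_congr rfl fun j _ => ?_
  rw [smul_mul_assoc, mul_smul_comm, ← smul_neg, ← mul_assoc,
    (commute_xPart_right (hU j) (hUγ j).symm).eq, mul_assoc, mul_assoc, cs.γ_anticomm, mul_neg,
    neg_neg]

theorem isSelfAdjoint_wilsonDirac (hU : ∀ j, U j ∈ unitary (H →L[ℂ] H))
    (hUc : ∀ j l, Commute (U j) (cs.c l)) (hUγ : ∀ j, Commute (U j) cs.γ) (κ m : ℝ) :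
    IsSelfAdjoint (wilsonDirac cs U κ m) := by
  have hmass : IsSelfAdjoint (m • 1 - κ • wilsonTerm U) :=
    ((IsSelfAdjoint.all m).smul (IsSelfAdjoint.one _)).sub
      ((IsSelfAdjoint.all κ).smul (isSelfAdjoint_wilsonTerm U))
  have hcomm : Commute cs.γ (m • 1 - κ • wilsonTerm U) :=
    ((Commute.one_right _).smul_right m).sub_right
      ((commute_wilsonTerm_γ hU hUγ).symm.smul_right κ)
  rw [wilsonDirac_eq]
  exact ((IsSelfAdjoint.all κ).smul (isSelfAdjoint_naiveDirac hU hUc)).add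
    ((IsSelfAdjoint.commute_iff cs.γ_sa hmass).1 hcomm)

theorem wilsonDirac_mul_self (hU : ∀ j, U j ∈ unitary (H →L[ℂ] H))
    (hUγ : ∀ j, Commute (U j) cs.γ) (κ m : ℝ) :
    wilsonDirac cs U κ m * wilsonDirac cs U κ m =
      m ^ 2 • 1 + (2 * κ * (κ - m)) • wilsonTerm U +
      κ ^ 2 • (naiveDirac cs U * naiveDirac cs U - ∑ j, xPart (U j) * xPart (U j)) +
      κ ^ 2 • (wilsonTerm U * wilsonTerm U - ∑ j, zPart (U j) * zPart (U j)) +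
      κ ^ 2 • (cs.γ * ⁅naiveDirac cs U, wilsonTerm U⁆) := by
  have hanti : κ • naiveDirac cs U * cs.γ = -(cs.γ * κ • naiveDirac cs U) := by
    rw [smul_mul_assoc, mul_smul_comm, naiveDirac_mul_γ hU hUγ, smul_neg]
  have hcomm : Commute (m • 1 - κ • wilsonTerm U) cs.γ :=
    ((Commute.one_left _).smul_left m).sub_left ((commute_wilsonTerm_γ hU hUγ).smul_left κ)
  rw [wilsonDirac_eq, add_mul_self_of_anticommute hanti hcomm cs.γ_sq, sum_xPart_mul_self hU]
  simp only [Ring.lie_def, mul_sub, sub_mul, smul_mul_assoc, mul_smul_comm, mul_one, one_mul]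
  module

theorem naiveDirac_mul_self (hU : ∀ j, U j ∈ unitary (H →L[ℂ] H))
    (hUc : ∀ j l, Commute (U j) (cs.c l)) :
    naiveDirac cs U * naiveDirac cs U = ∑ j, xPart (U j) * xPart (U j) -
      (2⁻¹ : ℝ) • ∑ j, ∑ l, ⁅xPart (U l), xPart (U j)⁆ * (cs.c l * cs.c j) := by
  set x := fun j => xPart (U j)
  have hexpand : naiveDirac cs U * naiveDirac cs U =
      -∑ j, ∑ l, x j * x l * (cs.c j * cs.c l) := by
    simp only [naiveDirac, Finset.sum_mul_sum, ← Finset.sum_neg_distrib]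
    refine Finset.sum_congr rfl fun j _ => Finset.sum_congr rfl fun l _ => ?_
    rw [smul_mul_smul_comm, Complex.I_mul_I, neg_one_smul, mul_assoc, ← mul_assoc (cs.c j),
      (commute_xPart_right (hU l) (hUc l j).symm).eq, mul_assoc, ← mul_assoc]
  have hdiag : (2 : ℝ) • ∑ j, x j * x j =
      -∑ j, ∑ l, x j * x l * (cs.c j * cs.c l + cs.c l * cs.c j) := by
    simp only [cs.c_rel, mul_ite, mul_zero, Finset.sum_ite_eq, Finset.mem_univ, if_true, neg_smul,
      mul_neg, mul_smul_comm, mul_one, Finset.sum_neg_distrib, neg_neg, Finset.smul_sum,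
      ofNat_smul_eq_nsmul]
  have hsymm : ∑ j, ∑ l, x j * x l * (cs.c j * cs.c l + cs.c l * cs.c j) =
      (2 : ℝ) • ∑ j, ∑ l, x j * x l * (cs.c j * cs.c l) -
        ∑ j, ∑ l, ⁅x l, x j⁆ * (cs.c l * cs.c j) := by
    rw [two_smul]
    nth_rewrite 3 [Finset.sum_comm]
    simp only [← Finset.sum_add_distrib, ← Finset.sum_sub_distrib]
    refine Finset.sum_congr rfl fun j _ => Finset.sum_congr rfl fun l _ => ?_
    rw [Ring.lie_def]
    noncomm_ring
  rw [hsymm] at hdiag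
  rw [hexpand]
  linear_combination (norm := module) -(2⁻¹ : ℝ) • hdiag

theorem neg_le_naiveDirac_mul_self_sub (hU : ∀ j, U j ∈ unitary (H →L[ℂ] H))
    (hUc : ∀ j l, Commute (U j) (cs.c l)) :
    -((commutatorDefect U / 2) • 1) ≤
      naiveDirac cs U * naiveDirac cs U - ∑ j, xPart (U j) * xPart (U j) := by
  have hsa : IsSelfAdjoint
      (naiveDirac cs U * naiveDirac cs U - ∑ j, xPart (U j) * xPart (U j)) := by
    have hsq : ∀ {a : H →L[ℂ] H}, IsSelfAdjoint a → IsSelfAdjoint (a * a) := fun ha =>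
      (IsSelfAdjoint.commute_iff ha ha).1 (Commute.refl _)
    exact (hsq (isSelfAdjoint_naiveDirac hU hUc)).sub
      (isSelfAdjoint_sum _ fun j _ => hsq (isSelfAdjoint_xPart _))
  refine neg_smul_one_le_isSelfAdjoint hsa ?_
  rw [naiveDirac_mul_self hU hUc, sub_sub_cancel_left, norm_neg, norm_smul, norm_inv,
    Real.norm_ofNat, inv_mul_eq_div, commutatorDefect]
  gcongr
  refine norm_sum_le_of_le _ fun j _ => norm_sum_le_of_le _ fun l _ => ?_
  rw [← mul_assoc, CStarRing.norm_mul_mem_unitary _ (cs.c_mem_unitary j),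
    CStarRing.norm_mul_mem_unitary _ (cs.c_mem_unitary l), norm_lie_comm]
  exact norm_lie_xPart_xPart_le (hU j) (hU l)

theorem neg_le_wilsonTerm_mul_self_sub (hU : ∀ j, U j ∈ unitary (H →L[ℂ] H)) :
    -((commutatorDefect U / 2) • 1) ≤
      wilsonTerm U * wilsonTerm U - ∑ j, zPart (U j) * zPart (U j) := by
  set s : Fin d → Fin d → H →L[ℂ] H := fun j l =>
    zPart (U j) * zPart (U l) + zPart (U l) * zPart (U j) + ‖⁅U j, U l⁆‖ • 1 with hs
  have hs_nonneg : ∀ j l, 0 ≤ s j l := fun j l =>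
    neg_le_iff_add_nonneg.1 (neg_norm_lie_le_anticommutator_zPart (hU j) (hU l))
  have hdiag : ∀ j, s j j = (2 : ℝ) • (zPart (U j) * zPart (U j)) := fun j => by
    simp [hs, Ring.lie_def, two_smul]
  have hle : ∑ j, s j j ≤ ∑ j, ∑ l, s j l := Finset.sum_le_sum fun j _ =>
    Finset.single_le_sum (fun l _ => hs_nonneg j l) (Finset.mem_univ j)
  have hsum : ∑ j, ∑ l, s j l =
      (2 : ℝ) • (wilsonTerm U * wilsonTerm U) + commutatorDefect U • 1 := by
    simp only [hs, Finset.sum_add_distrib, commutatorDefect, Finset.sum_smul, wilsonTerm,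
      Finset.sum_mul_sum, two_smul]
    congr 2
    exact Finset.sum_comm
  simp only [hdiag, hsum, ← Finset.smul_sum] at hle
  have hhalf := smul_le_smul_of_nonneg_left hle (show (0 : ℝ) ≤ 2⁻¹ by norm_num)
  rw [inv_smul_smul₀ two_ne_zero, smul_add, inv_smul_smul₀ two_ne_zero, smul_smul,
    inv_mul_eq_div] at hhalf
  rwa [neg_le_sub_iff_le_add]

theorem norm_lie_naiveDirac_wilsonTerm_le (hU : ∀ j, U j ∈ unitary (H →L[ℂ] H))
    (hUc : ∀ j l, Commute (U j) (cs.c l)) :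
    ‖⁅naiveDirac cs U, wilsonTerm U⁆‖ ≤ commutatorDefect U := by
  have hlie : ⁅naiveDirac cs U, wilsonTerm U⁆ =
      ∑ j, ∑ l, Complex.I • (⁅xPart (U j), zPart (U l)⁆ * cs.c j) := by
    simp only [Ring.lie_def, naiveDirac, wilsonTerm, Finset.sum_mul_sum]
    rw [Finset.sum_comm (f := fun l j => zPart (U l) * _)]
    simp only [← Finset.sum_sub_distrib]
    refine Finset.sum_congr rfl fun j _ => Finset.sum_congr rfl fun l _ => ?_
    rw [mul_smul_comm, smul_mul_assoc, ← smul_sub, sub_mul, mul_assoc, mul_assoc, mul_assoc,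
      (commute_zPart_right (hU l) (hUc l j).symm).eq]
  rw [hlie, commutatorDefect]
  refine norm_sum_le_of_le _ fun j _ => norm_sum_le_of_le _ fun l _ => ?_
  rw [norm_smul, Complex.norm_I, one_mul,
    CStarRing.norm_mul_mem_unitary _ (cs.c_mem_unitary j)]
  exact norm_lie_xPart_zPart_le (hU j) (hU l)

theorem neg_le_γ_mul_lie (hU : ∀ j, U j ∈ unitary (H →L[ℂ] H))
    (hUc : ∀ j l, Commute (U j) (cs.c l)) (hUγ : ∀ j, Commute (U j) cs.γ) :
    -(commutatorDefect U • 1) ≤ cs.γ * ⁅naiveDirac cs U, wilsonTerm U⁆ := by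
  refine neg_smul_one_le_isSelfAdjoint ?_ ?_
  · have hP := naiveDirac_mul_γ hU hUγ
    have hZ := commute_wilsonTerm_γ hU hUγ
    simp only [IsSelfAdjoint, Ring.lie_def, star_mul, star_sub, cs.γ_sa,
      (isSelfAdjoint_naiveDirac hU hUc).star_eq, (isSelfAdjoint_wilsonTerm U).star_eq]
    rw [sub_mul, mul_assoc, mul_assoc, hP, hZ.eq, mul_neg, ← mul_assoc, hZ.eq, ← mul_assoc, hP,
      neg_mul, mul_sub, mul_assoc, mul_assoc]
    abel
  · rw [CStarRing.norm_mem_unitary_mul _ cs.γ_mem_unitary]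
    exact norm_lie_naiveDirac_wilsonTerm_le hU hUc

theorem smul_one_le_wilsonDirac_mul_self (hU : ∀ j, U j ∈ unitary (H →L[ℂ] H))
    (hUc : ∀ j l, Commute (U j) (cs.c l)) (hUγ : ∀ j, Commute (U j) cs.γ) {κ m : ℝ}
    (hκ : 0 ≤ κ) (hmκ : m ≤ κ) :
    (m ^ 2 - 2 * κ ^ 2 * commutatorDefect U) • 1 ≤
      wilsonDirac cs U κ m * wilsonDirac cs U κ m := by
  have hwilson : 0 ≤ (2 * κ * (κ - m)) • wilsonTerm U :=
    smul_nonneg (mul_nonneg (by positivity) (sub_nonneg.2 hmκ)) (wilsonTerm_nonneg hU)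
  calc (m ^ 2 - 2 * κ ^ 2 * commutatorDefect U) • (1 : H →L[ℂ] H)
      = m ^ 2 • 1 + 0 + κ ^ 2 • -((commutatorDefect U / 2) • 1) +
          κ ^ 2 • -((commutatorDefect U / 2) • 1) + κ ^ 2 • -(commutatorDefect U • 1) := by
        module
    _ ≤ wilsonDirac cs U κ m * wilsonDirac cs U κ m := by
        rw [wilsonDirac_mul_self hU hUγ]
        gcongr
        · exact neg_le_naiveDirac_mul_self_sub hU hUc
        · exact neg_le_wilsonTerm_mul_self_sub hU
        · exact neg_le_γ_mul_lie hU hUc hUγ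

theorem isUnit_wilsonDirac (hU : ∀ j, U j ∈ unitary (H →L[ℂ] H))
    (hUc : ∀ j l, Commute (U j) (cs.c l)) (hUγ : ∀ j, Commute (U j) cs.γ) {κ m : ℝ}
    (hκ : 0 ≤ κ) (hmκ : m ≤ κ) (hgap : 2 * κ ^ 2 * commutatorDefect U < m ^ 2) :
    IsUnit (wilsonDirac cs U κ m) := by
  rw [← isUnit_mul_self_iff]
  refine CStarAlgebra.isUnit_of_le _ (smul_one_le_wilsonDirac_mul_self hU hUc hUγ hκ hmκ) ?_
  exact isStrictlyPositive_one.smul (sub_pos.2 hgap)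

end Gap

section Index

open Topology

variable {H : Type*} [NormedAddCommGroup H] [InnerProductSpace ℂ H]

theorem negSpace_eq_posSpace_neg (A : H →L[ℂ] H) : negSpace A = posSpace (-A) := by
  rw [negSpace, posSpace, ← (Equiv.neg ℝ).iSup_comp]
  refine iSup_congr fun μ => iSup_congr_Prop (by simp) fun _ => ?_
  ext v
  simp [neg_eq_iff_eq_neg]

variable {A : H →L[ℂ] H}

theorem posSpace_isOrtho_eigenspace (hA : A.toLinearMap.IsSymmetric) {μ : ℝ} (hμ : μ ≤ 0) :
    posSpace A ⟂ Module.End.eigenspace A.toLinearMap (μ : ℂ) := by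
  simp only [posSpace, Submodule.isOrtho_iSup_left]
  intro ν hν
  refine hA.orthogonalFamily_eigenspaces.isOrtho ?_
  exact_mod_cast (hμ.trans_lt hν).ne'

variable [FiniteDimensional ℂ H]

theorem re_inner_apply_self_eq_sum (hA : A.toLinearMap.IsSymmetric) (v : H) :
    (inner ℂ (A v) v).re =
      ∑ i, hA.eigenvalues rfl i * ‖inner ℂ (hA.eigenvectorBasis rfl i) v‖ ^ 2 := by
  rw [← (hA.eigenvectorBasis rfl).sum_inner_mul_inner, Complex.re_sum]
  refine Finset.sum_congr rfl fun i _ => ?_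
  have hcoord : inner ℂ (A v) (hA.eigenvectorBasis rfl i) =
      hA.eigenvalues rfl i * inner ℂ v (hA.eigenvectorBasis rfl i) := by
    refine (hA v _).trans ?_
    rw [hA.apply_eigenvectorBasis, inner_smul_right]
    rfl
  rw [hcoord, ← inner_conj_symm v, mul_assoc, Complex.conj_mul']
  norm_cast

theorem exists_pos_forall_mem_posSpace (hA : IsSelfAdjoint A) :
    ∃ g > 0, ∀ v ∈ posSpace A, g * ‖v‖ ^ 2 ≤ (inner ℂ (A v) v).re := by
  have hS := hA.isSymmetric
  obtain ⟨g, hg, hle⟩ : ∃ g > 0, ∀ i, 0 < hS.eigenvalues rfl i → g ≤ hS.eigenvalues rfl i := by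
    have hev : ∀ᶠ g in 𝓝[>] (0 : ℝ), ∀ i, 0 < hS.eigenvalues rfl i → g ≤ hS.eigenvalues rfl i :=
      Filter.eventually_all.2 fun i => Filter.eventually_imp_distrib_left.2 fun hi =>
        nhdsWithin_le_nhds (eventually_le_nhds hi)
    exact (eventually_mem_nhdsWithin.and hev).exists
  refine ⟨g, hg, fun v hv => ?_⟩
  rw [re_inner_apply_self_eq_sum hS, ← (hS.eigenvectorBasis rfl).sum_sq_norm_inner_right v,
    Finset.mul_sum]
  refine Finset.sum_le_sum fun i _ => ?_
  rcases lt_or_ge 0 (hS.eigenvalues rfl i) with hi | hi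
  · exact mul_le_mul_of_nonneg_right (hle i hi) (sq_nonneg _)
  · have hzero : inner ℂ (hS.eigenvectorBasis rfl i) v = 0 :=
      (posSpace_isOrtho_eigenspace hS hi).symm.inner_eq
        (Module.End.mem_eigenspace_iff.2 (hS.apply_eigenvectorBasis rfl i)) hv
    simp [hzero]

theorem re_inner_nonpos_of_mem_negSpace (hA : IsSelfAdjoint A) {v : H} (hv : v ∈ negSpace A) :
    (inner ℂ (A v) v).re ≤ 0 := by
  rw [negSpace_eq_posSpace_neg] at hv
  obtain ⟨g, hg, hle⟩ := exists_pos_forall_mem_posSpace hA.neg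
  have hneg := (by positivity : 0 ≤ g * ‖v‖ ^ 2).trans (hle v hv)
  rwa [neg_apply, inner_neg_left, Complex.neg_re, neg_nonneg] at hneg

theorem eventually_disjoint_posSpace_negSpace (hA : IsSelfAdjoint A) :
    ∀ᶠ B in 𝓝 A, IsSelfAdjoint B → Disjoint (posSpace A) (negSpace B) := by
  obtain ⟨g, hg, hle⟩ := exists_pos_forall_mem_posSpace hA
  filter_upwards [Metric.ball_mem_nhds A hg] with B hBA hB
  rw [Metric.mem_ball, dist_comm, dist_eq_norm] at hBA
  rw [Submodule.disjoint_def]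
  intro v hvA hvB
  have hform : (inner ℂ ((A - B) v) v).re ≤ ‖A - B‖ * ‖v‖ ^ 2 :=
    calc (inner ℂ ((A - B) v) v).re ≤ ‖(A - B) v‖ * ‖v‖ := re_inner_le_norm (𝕜 := ℂ) _ _
      _ ≤ ‖A - B‖ * ‖v‖ * ‖v‖ := by gcongr; exact (A - B).le_opNorm v
      _ = ‖A - B‖ * ‖v‖ ^ 2 := by ring
  rw [sub_apply, inner_sub_left, Complex.sub_re] at hform
  by_contra hv
  have hlt : ‖A - B‖ * ‖v‖ ^ 2 < g * ‖v‖ ^ 2 :=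
    mul_lt_mul_of_pos_right hBA (by positivity)
  linarith [hle v hvA, re_inner_nonpos_of_mem_negSpace hB hvB]

theorem posSpace_sup_negSpace (hA : IsSelfAdjoint A) (hu : IsUnit A) :
    posSpace A ⊔ negSpace A = ⊤ := by
  have hS := hA.isSymmetric
  rw [eq_top_iff, ← (hS.eigenvectorBasis rfl).toBasis.span_eq, Submodule.span_le]
  rintro _ ⟨i, rfl⟩
  have hmem : hS.eigenvectorBasis rfl i ∈
      Module.End.eigenspace A.toLinearMap (hS.eigenvalues rfl i : ℂ) :=
    Module.End.mem_eigenspace_iff.2 (hS.apply_eigenvectorBasis rfl i)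
  rw [OrthonormalBasis.coe_toBasis]
  rcases lt_trichotomy (hS.eigenvalues rfl i) 0 with hneg | hzero | hpos
  · exact Submodule.mem_sup_right <|
      Submodule.mem_iSup_of_mem _ (Submodule.mem_iSup_of_mem hneg hmem)
  · rw [hzero, Complex.ofReal_zero, Module.End.eigenspace_zero] at hmem
    have hinj := (ContinuousLinearMap.isUnit_iff_bijective.1 hu).injective
    exact absurd (hinj (hmem.trans (map_zero A).symm))
      ((hS.eigenvectorBasis rfl).orthonormal.ne_zero i)
  · exact Submodule.mem_sup_left <|
      Submodule.mem_iSup_of_mem _ (Submodule.mem_iSup_of_mem hpos hmem)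

theorem finrank_posSpace_add_finrank_negSpace (hA : IsSelfAdjoint A) (hu : IsUnit A) :
    Module.finrank ℂ (posSpace A) + Module.finrank ℂ (negSpace A) = Module.finrank ℂ H :=
  Submodule.finrank_add_eq_of_isCompl
    ⟨(eventually_disjoint_posSpace_negSpace hA).self_of_nhds hA,
      codisjoint_iff.2 (posSpace_sup_negSpace hA hu)⟩

theorem eventually_Ind_eq (hA : IsSelfAdjoint A) (hu : IsUnit A) :
    ∀ᶠ B in 𝓝 A, IsSelfAdjoint B → IsUnit B → Ind B = Ind A := by
  have hneg := (continuous_neg.tendsto A).eventually (eventually_disjoint_posSpace_negSpace hA.neg)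
  filter_upwards [eventually_disjoint_posSpace_negSpace hA, hneg] with B hpos hneg hB hBu
  have hle := Submodule.finrank_add_finrank_le_of_disjoint (hpos hB)
  have hge := Submodule.finrank_add_finrank_le_of_disjoint (hneg hB.neg)
  rw [← negSpace_eq_posSpace_neg, negSpace_eq_posSpace_neg (-B), neg_neg] at hge
  have hsumA := finrank_posSpace_add_finrank_negSpace hA hu
  have hsumB := finrank_posSpace_add_finrank_negSpace hB hBu
  rw [Ind, Ind, show Module.finrank ℂ (posSpace B) = Module.finrank ℂ (posSpace A) by lia,
    show Module.finrank ℂ (negSpace B) = Module.finrank ℂ (negSpace A) by lia]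

theorem Ind_eq_of_isPreconnected {S : Set (H →L[ℂ] H)} (hS : IsPreconnected S)
    (hSA : ∀ A ∈ S, IsSelfAdjoint A ∧ IsUnit A) {A B : H →L[ℂ] H} (hA : A ∈ S) (hB : B ∈ S) :
    Ind A = Ind B := by
  refine hS.induction₂ (fun A B => Ind A = Ind B) (fun A hA => ?_) (fun _ _ _ _ _ _ => Eq.trans)
    (fun _ _ _ _ => Eq.symm) hA hB
  filter_upwards [nhdsWithin_le_nhds (eventually_Ind_eq (hSA A hA).1 (hSA A hA).2),
    self_mem_nhdsWithin] with B heq hB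
  exact (heq (hSA B hB).1 (hSA B hB).2).symm

end Index

section Homotopy

/-- The set of parameters `(κ, m)`, `0 < m ≤ κ`, for which the commutators of the `U j` are too
small to close the mass gap of `wilsonDirac cs U κ m`. The last condition is written as a bound on
the slope `m / κ`, which makes it monotone and linear in `(κ, m)`. -/
def gappedRegion {ι A : Type*} [Fintype ι] [NormedRing A] (u : ι → A) : Set (ℝ × ℝ) :=
  {p | 0 < p.2 ∧ p.2 ≤ p.1 ∧ 2 * commutatorDefect u < (p.2 / p.1) ^ 2}

theorem mem_gappedRegion_of_div_le {ι A : Type*} [Fintype ι] [NormedRing A] {u : ι → A}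
    {κ m κ' m' : ℝ} (h : (κ, m) ∈ gappedRegion u) (hm' : 0 < m') (hmκ' : m' ≤ κ')
    (hslope : m / κ ≤ m' / κ') : (κ', m') ∈ gappedRegion u := by
  obtain ⟨hm, hmκ, hgap⟩ := h
  have hslope_nonneg : 0 ≤ m / κ := div_nonneg hm.le (hm.le.trans hmκ)
  exact ⟨hm', hmκ', hgap.trans_le (pow_le_pow_left₀ hslope_nonneg hslope 2)⟩

theorem convex_gappedRegion {ι A : Type*} [Fintype ι] [NormedRing A] (u : ι → A) :
    Convex ℝ (gappedRegion u) := by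
  set s := √(2 * commutatorDefect u)
  have hlinear : gappedRegion u =
      {p | 0 < p.2} ∩ ({p | (p.2 - p.1 : ℝ) ≤ 0} ∩ {p | 0 < p.2 - s * p.1}) := by
    ext ⟨κ, m⟩
    refine and_congr_right fun hm : 0 < m => ?_
    simp only [Set.mem_inter_iff, Set.mem_ofPred_eq, sub_nonpos, sub_pos]
    refine and_congr_right fun hmκ => ?_
    have hκ : 0 < κ := hm.trans_le hmκ
    rw [← lt_div_iff₀ hκ, Real.sqrt_lt' (div_pos hm hκ)]
  rw [hlinear]
  exact (convex_halfSpace_gt (LinearMap.snd ℝ ℝ ℝ).isLinear 0).inter <|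
    (convex_halfSpace_le (LinearMap.snd ℝ ℝ ℝ - LinearMap.fst ℝ ℝ ℝ).isLinear 0).inter
      (convex_halfSpace_gt (LinearMap.snd ℝ ℝ ℝ - s • LinearMap.fst ℝ ℝ ℝ).isLinear 0)

variable {H : Type*} [NormedAddCommGroup H] [InnerProductSpace ℂ H] {d : ℕ}

theorem isUnit_wilsonDirac_of_mem_gappedRegion [CompleteSpace H] {cs : CliffordSystem H d}
    {U : Fin d → H →L[ℂ] H} (hU : ∀ j, U j ∈ unitary (H →L[ℂ] H))
    (hUc : ∀ j l, Commute (U j) (cs.c l)) (hUγ : ∀ j, Commute (U j) cs.γ) {κ m : ℝ}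
    (h : (κ, m) ∈ gappedRegion U) : IsUnit (wilsonDirac cs U κ m) := by
  obtain ⟨hm, hmκ, hgap⟩ := h
  have hκ : 0 < κ := hm.trans_le hmκ
  refine isUnit_wilsonDirac hU hUc hUγ hκ.le hmκ ?_
  rw [div_pow, lt_div_iff₀ (by positivity)] at hgap
  linarith

theorem Ind_wilsonDirac_eq_of_mem_gappedRegion [FiniteDimensional ℂ H] {cs : CliffordSystem H d}
    {U : Fin d → H →L[ℂ] H} (hU : ∀ j, U j ∈ unitary (H →L[ℂ] H))
    (hUc : ∀ j l, Commute (U j) (cs.c l)) (hUγ : ∀ j, Commute (U j) cs.γ) {κ m κ' m' : ℝ}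
    (h : (κ, m) ∈ gappedRegion U) (h' : (κ', m') ∈ gappedRegion U) :
    Ind (wilsonDirac cs U κ m) = Ind (wilsonDirac cs U κ' m') := by
  refine Ind_eq_of_isPreconnected ((convex_gappedRegion U).isPreconnected.image _
    (continuous_wilsonDirac cs U).continuousOn) ?_ (Set.mem_image_of_mem _ h)
    (Set.mem_image_of_mem _ h')
  rintro _ ⟨p, hp, rfl⟩
  exact ⟨isSelfAdjoint_wilsonDirac hU hUc hUγ _ _,
    isUnit_wilsonDirac_of_mem_gappedRegion hU hUc hUγ hp⟩

end Homotopy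

theorem statement6_general (d : ℕ) {H : Type*} [NormedAddCommGroup H]
    [InnerProductSpace ℂ H] [FiniteDimensional ℂ H] (cs : CliffordSystem H d)
    (U : Fin d → H →L[ℂ] H) (hU : ∀ j, U j ∈ unitary (H →L[ℂ] H))
    (hUc : ∀ j l, Commute (U j) (cs.c l)) (hUγ : ∀ j, Commute (U j) cs.γ)
    (m K : ℝ) (hm : 0 < m) (hmK : m ≤ K) (hgap : 2 * K ^ 2 * commutatorDefect U < m ^ 2) :
    (∀ κ ∈ Set.Icc m K, IsUnit (wilsonDirac cs U κ m)) ∧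
      Ind (wilsonDirac cs U K m) = Ind (wilsonDirac cs U 1 1) := by
  have hK : 0 < K := hm.trans_le hmK
  have hKm : (K, m) ∈ gappedRegion U := by
    refine ⟨hm, hmK, ?_⟩
    rw [div_pow, lt_div_iff₀ (by positivity)]
    linarith
  have hκm : ∀ κ ∈ Set.Icc m K, (κ, m) ∈ gappedRegion U := fun κ hκ =>
    mem_gappedRegion_of_div_le hKm hm hκ.1
      (div_le_div_of_nonneg_left hm.le (hm.trans_le hκ.1) hκ.2)
  have h11 : (1, 1) ∈ gappedRegion U :=
    mem_gappedRegion_of_div_le hKm one_pos le_rfl (by rwa [div_one, div_le_one hK])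
  exact ⟨fun κ hκ => isUnit_wilsonDirac_of_mem_gappedRegion hU hUc hUγ (hκm κ hκ),
    Ind_wilsonDirac_eq_of_mem_gappedRegion hU hUc hUγ hKm h11⟩

/-- under the gap condition `m² > 4d²K²δ`, the operators `D(κ,m)` are
invertible for `κ ∈ [m,K]` and `𝐈(D(K,m)) = 𝐈(D(1,1))`. -/
theorem statement6 (d : ℕ) (hd : 1 ≤ d) {H : Type*} [NormedAddCommGroup H]
    [InnerProductSpace ℂ H] [FiniteDimensional ℂ H] (cs : CliffordSystem H d)
    (U : Fin d → H →L[ℂ] H) (hU : ∀ j, U j ∈ unitary (H →L[ℂ] H))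
    (hUc : ∀ j l, Commute (U j) (cs.c l)) (hUγ : ∀ j, Commute (U j) cs.γ)
    (δ : ℝ) (hδ : 0 ≤ δ) (hcomm : ∀ j l, ‖U j * U l - U l * U j‖ ≤ δ)
    (m K : ℝ) (hm : 0 < m) (hmK : m ≤ K)
    (hgap : m ^ 2 > 4 * (d : ℝ) ^ 2 * K ^ 2 * δ) :
    (∀ κ ∈ Set.Icc m K, IsUnit (wilsonDirac cs U κ m)) ∧
      Ind (wilsonDirac cs U K m) = Ind (wilsonDirac cs U 1 1) := by
  refine statement6_general d cs U hU hUc hUγ m K hm hmK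
    ((mul_le_mul_of_nonneg_left (commutatorDefect_le hcomm) (by positivity)).trans_lt ?_)
  rw [Fintype.card_fin]
  linarith [show 0 ≤ (d : ℝ) ^ 2 * K ^ 2 * δ by positivity]
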